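/- Fix integers n ≥ 1 and k with 1 ≤ k ≤ n, let x̃ ∈ ℝⁿ be k-sparse nonnegative, σ > 0 and C_w > 0, and let g ∈ ℝᵐ and h ∈ ℝⁿ be random vectors with i.i.d. standard normal entries, mutually independent. Then the random variable ξ(σ, g, h, x̃) is integrable and satisfies the Gaussian concentration inequality: for every t > 0, P( |ξ(σ, g, h, x̃) − E[ξ(σ, g, h, x̃)]| ≥ t ) ≤ 2·exp( −t²/(2·(2·C_w² + σ²)) ). -/

import Mathlib

open MeasureTheory ProbabilityTheory

noncomputable def e2norm {d : ℕ} (x : Fin d → ℝ) : ℝ := Real.sqrt (∑ i, x i ^ 2)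

noncomputable def l1norm {d : ℕ} (x : Fin d → ℝ) : ℝ := ∑ i, |x i|

def kSparseNonneg (n k : ℕ) (x : Fin n → ℝ) : Prop :=
  (∀ i : Fin n, (i : ℕ) < n - k → x i = 0) ∧ ∀ i, 0 ≤ x i

/-- Product Gaussian measure on (g, h). -/
noncomputable def muGH (m n : ℕ) : Measure ((Fin m → ℝ) × (Fin n → ℝ)) :=
  (Measure.pi fun _ : Fin m => gaussianReal 0 1).prod
    (Measure.pi fun _ : Fin n => gaussianReal 0 1)

/-- ξ(σ, g, h, x̃) as a function of the Gaussian pair (g, h). -/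
noncomputable def xiFun (m n : ℕ) (σ Cw : ℝ) (xt : Fin n → ℝ)
    (p : (Fin m → ℝ) × (Fin n → ℝ)) : ℝ :=
  sInf ((fun w : Fin n → ℝ =>
      Real.sqrt (e2norm w ^ 2 + σ ^ 2) * e2norm p.1 + ∑ i, p.2 i * w i) ''
    {w : Fin n → ℝ | e2norm w ≤ Cw ∧ l1norm (xt + w) ≤ l1norm xt})

/-!
The one-dimensional Prékopa–Leindler inequality, applied to functions multiplied by the Gaussian
density, gives Maurey's property `(τ)` for the Gaussian measure: the identity
`s x² + (1 - s) y² - (s x + (1 - s) y)² = s (1 - s) (x - y)²` produces the quadratic cost. Property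
`(τ)` tensorizes, so standard Gaussian measures of every dimension have it with the same constants.
Testing it on `f = exp F` and `g = exp (-s F / (1 - s))` with `F` Lipschitz, using Jensen's
inequality for `g` and letting `s → 0` bounds the exponential moments of `F - E F` by those of a
Gaussian with the sharp variance `K²`, where `K` is the Lipschitz constant.

For fixed `w`, the function of `(g, h)` minimized in `ξ` is Lipschitz with constant
`√(2 ‖w‖² + σ²)` by the Cauchy–Schwarz inequality, and Lipschitz bounds survive infima.
-/

section PrekopaLeindler

open Set
open scoped ENNReal Pointwise

theorem volume_add_volume_le_volume_add_of_isCompact {K L : Set ℝ} (hK : IsCompact K)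
    (hL : IsCompact L) (hKne : K.Nonempty) (hLne : L.Nonempty) :
    volume K + volume L ≤ volume (K + L) := by
  obtain ⟨a, haK, ha⟩ := hK.exists_isGreatest hKne
  obtain ⟨b, hbL, hb⟩ := hL.exists_isLeast hLne
  -- Translated so that `max K` and `min L` coincide, `K` and `L` meet in one point.
  have overlap : AEDisjoint volume (b +ᵥ K) (a +ᵥ L) := by
    refine measure_mono_null (t := {a + b}) ?_ Real.volume_singleton
    rintro _ ⟨⟨x, hx, rfl⟩, y, hy, hxy⟩
    have meet : a + y = b + x := hxy
    have : b + x = a + b := by linarith only [ha hx, hb hy, meet]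
    exact this
  calc volume K + volume L = volume (b +ᵥ K) + volume (a +ᵥ L) := by
        rw [measure_vadd, measure_vadd]
    _ = volume ((b +ᵥ K) ∪ (a +ᵥ L)) :=
        (measure_union₀ (hL.vadd a).measurableSet.nullMeasurableSet overlap).symm
    _ ≤ volume (K + L) := by
        refine measure_mono (union_subset ?_ (vadd_set_subset_add haK))
        rw [add_comm K]
        exact vadd_set_subset_add hbL

theorem volume_add_volume_le_volume_add {A B : Set ℝ} (hA : MeasurableSet A)
    (hB : MeasurableSet B) (hAne : A.Nonempty) (hBne : B.Nonempty) :
    volume A + volume B ≤ volume (A + B) := by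
  obtain ⟨a, ha⟩ := hAne
  obtain ⟨b, hb⟩ := hBne
  simp only [hA.measure_eq_iSup_isCompact, hB.measure_eq_iSup_isCompact, iSup_and']
  refine ENNReal.biSup_add_biSup_le' ⟨∅, empty_subset A, isCompact_empty⟩
    ⟨∅, empty_subset B, isCompact_empty⟩ ?_
  rintro K ⟨hKA, hK⟩ L ⟨hLB, hL⟩
  calc volume K + volume L ≤ volume (insert a K) + volume (insert b L) := by
        gcongr <;> exact subset_insert _ _
    _ ≤ volume (insert a K + insert b L) :=
        volume_add_volume_le_volume_add_of_isCompact (hK.insert a) (hL.insert b)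
          (insert_nonempty a K) (insert_nonempty b L)
    _ ≤ volume (A + B) := by
        gcongr
        exacts [insert_subset ha hKA, insert_subset hb hLB]

theorem mul_volume_add_mul_volume_le_volume_smul_add_smul {A B : Set ℝ} (hA : MeasurableSet A)
    (hB : MeasurableSet B) (hAne : A.Nonempty) (hBne : B.Nonempty) {a b : ℝ} (ha : 0 < a)
    (hb : 0 < b) :
    ENNReal.ofReal a * volume A + ENNReal.ofReal b * volume B ≤ volume (a • A + b • B) := by
  have volume_smul (r : ℝ) (hr : 0 < r) (D : Set ℝ) :
      ENNReal.ofReal r * volume D = volume (r • D) := by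
    simp [Measure.addHaar_smul, abs_of_pos hr]
  rw [volume_smul a ha, volume_smul b hb]
  exact volume_add_volume_le_volume_add (hA.const_smul₀ a) (hB.const_smul₀ b) hAne.smul_set
    hBne.smul_set

theorem lintegral_eq_lintegral_meas_ofReal_lt {α : Type*} [MeasurableSpace α] {μ : Measure α}
    [SFinite μ] {f : α → ℝ≥0∞} (hf : Measurable f) :
    ∫⁻ x, f x ∂μ = ∫⁻ t in Ioi (0 : ℝ), μ {x | ENNReal.ofReal t < f x} := by
  have volume_lt (a : ℝ≥0∞) : volume.restrict (Ioi 0) {t : ℝ | ENNReal.ofReal t < a} = a := by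
    rw [Measure.restrict_apply (measurableSet_lt (by fun_prop) measurable_const)]
    rcases eq_or_ne a ∞ with rfl | ha
    · simp
    · have : {t : ℝ | ENNReal.ofReal t < a} ∩ Ioi 0 = Ioo 0 a.toReal := by
        ext t
        simp only [mem_inter_iff, mem_ofPred_eq, mem_Ioi, mem_Ioo, and_comm (a := 0 < t)]
        exact and_congr_left fun ht => by rw [ENNReal.ofReal_lt_iff_lt_toReal ht.le ha]
      rw [this, Real.volume_Ioo, sub_zero, ENNReal.ofReal_toReal ha]
  have hypograph : MeasurableSet {p : α × ℝ | ENNReal.ofReal p.2 < f p.1} :=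
    measurableSet_lt (by fun_prop) (by fun_prop)
  calc ∫⁻ x, f x ∂μ = (μ.prod (volume.restrict (Ioi 0))) {p | ENNReal.ofReal p.2 < f p.1} := by
        rw [Measure.prod_apply hypograph]
        exact lintegral_congr fun x => (volume_lt (f x)).symm
    _ = ∫⁻ t in Ioi (0 : ℝ), μ {x | ENNReal.ofReal t < f x} :=
        Measure.prod_apply_symm hypograph

theorem iSup_lintegral_min {α : Type*} [MeasurableSpace α] {μ : Measure α}
    {f : α → ℝ≥0∞} (hf : Measurable f) : ⨆ N : ℕ, ∫⁻ x, min (f x) N ∂μ = ∫⁻ x, f x ∂μ := by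
  rw [← lintegral_iSup (fun N => hf.min measurable_const)
    fun N M hNM x => min_le_min_left _ (by exact_mod_cast hNM)]
  refine lintegral_congr fun x => ?_
  rw [← inf_iSup_eq, ENNReal.iSup_natCast, inf_top_eq]

theorem rpow_mul_rpow_one_sub_le {s : ℝ} (hs : s ∈ Ioo 0 1) (a b : ℝ≥0∞) :
    a ^ s * b ^ (1 - s) ≤ ENNReal.ofReal s * a + ENNReal.ofReal (1 - s) * b := by
  have hs' : 0 < 1 - s := sub_pos.2 hs.2
  have young := ENNReal.young_inequality (a ^ s) (b ^ (1 - s)) (p := s⁻¹) (q := (1 - s)⁻¹)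
    ⟨by simp, inv_pos.2 hs.1, inv_pos.2 hs'⟩
  rwa [ENNReal.rpow_rpow_inv hs.1.ne', ENNReal.rpow_rpow_inv hs'.ne',
    ENNReal.ofReal_inv_of_pos hs.1, ENNReal.ofReal_inv_of_pos hs', div_eq_mul_inv, inv_inv,
    div_eq_mul_inv, inv_inv, mul_comm a, mul_comm b] at young

variable {f g h : ℝ → ℝ≥0∞} {s : ℝ}

theorem mul_lintegral_add_mul_lintegral_le_of_iSup_eq_one (hs : s ∈ Ioo 0 1) (hf : Measurable f)
    (hg : Measurable g) (hh : Measurable h) (hf1 : ⨆ x, f x = 1) (hg1 : ⨆ x, g x = 1)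
    (hfgh : ∀ x y, f x ^ s * g y ^ (1 - s) ≤ h (s * x + (1 - s) * y)) :
    ENNReal.ofReal s * (∫⁻ x, f x) + ENNReal.ofReal (1 - s) * (∫⁻ x, g x) ≤ ∫⁻ x, h x := by
  obtain ⟨hs0, hs1⟩ := hs
  have measurable_level (u : ℝ → ℝ≥0∞) :
      Measurable fun t : ℝ => volume {x | ENNReal.ofReal t < u x} :=
    Antitone.measurable fun a b hab => measure_mono fun x hx =>
      (ENNReal.ofReal_le_ofReal hab).trans_lt hx
  rw [lintegral_eq_lintegral_meas_ofReal_lt hf, lintegral_eq_lintegral_meas_ofReal_lt hg,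
    lintegral_eq_lintegral_meas_ofReal_lt hh, ← lintegral_const_mul _ (measurable_level f),
    ← lintegral_const_mul _ (measurable_level g),
    ← lintegral_add_left ((measurable_level f).const_mul _)]
  refine lintegral_mono fun t => ?_
  set τ := ENNReal.ofReal t
  rcases lt_or_ge τ 1 with ht | ht
  · have level_nonempty (u : ℝ → ℝ≥0∞) (hu : ⨆ x, u x = 1) : {x | τ < u x}.Nonempty := by
      obtain ⟨x, hx⟩ := lt_iSup_iff.1 (hu.symm ▸ ht)
      exact ⟨x, hx⟩
    refine (mul_volume_add_mul_volume_le_volume_smul_add_smul (measurableSet_lt measurable_const hf)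
      (measurableSet_lt measurable_const hg) (level_nonempty f hf1) (level_nonempty g hg1) hs0
      (sub_pos.2 hs1)).trans (measure_mono ?_)
    rintro _ ⟨_, ⟨x, hx, rfl⟩, _, ⟨y, hy, rfl⟩, rfl⟩
    calc τ = τ ^ s * τ ^ (1 - s) := by
          rw [← ENNReal.rpow_add_of_nonneg _ _ hs0.le (sub_pos.2 hs1).le, add_sub_cancel,
            ENNReal.rpow_one]
      _ < f x ^ s * g y ^ (1 - s) :=
          ENNReal.mul_lt_mul (ENNReal.rpow_lt_rpow hx hs0)
            (ENNReal.rpow_lt_rpow hy (sub_pos.2 hs1))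
      _ ≤ h (s * x + (1 - s) * y) := hfgh x y
  · have level_empty (u : ℝ → ℝ≥0∞) (hu : ⨆ x, u x = 1) : {x | τ < u x} = ∅ :=
      eq_empty_of_forall_notMem fun x hx => (((le_iSup u x).trans hu.le).trans ht).not_gt hx
    simp [level_empty f hf1, level_empty g hg1]

theorem prekopa_leindler_of_bdd (hs : s ∈ Ioo 0 1) (hf : Measurable f)
    (hg : Measurable g) (hh : Measurable h) (hfb : ⨆ x, f x ≠ ∞) (hgb : ⨆ x, g x ≠ ∞)
    (hfgh : ∀ x y, f x ^ s * g y ^ (1 - s) ≤ h (s * x + (1 - s) * y)) :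
    (∫⁻ x, f x) ^ s * (∫⁻ x, g x) ^ (1 - s) ≤ ∫⁻ x, h x := by
  have hs0 := hs.1
  have hs1 := hs.2
  have hs' : 0 < 1 - s := sub_pos.2 hs1
  set a := ⨆ x, f x
  set b := ⨆ x, g x
  rcases eq_or_ne a 0 with ha0 | ha0
  · simp [ENNReal.iSup_eq_zero.1 ha0, hs0]
  rcases eq_or_ne b 0 with hb0 | hb0
  · simp [ENNReal.iSup_eq_zero.1 hb0, hs1]
  set c := a⁻¹ ^ s * b⁻¹ ^ (1 - s)
  have hc0 : c ≠ 0 := by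
    simp [c, ENNReal.rpow_eq_zero_iff, ha0, hfb, hb0, hgb]
  have hcb : c ≠ ∞ := ENNReal.mul_ne_top
    (ENNReal.rpow_ne_top_of_nonneg hs0.le (ENNReal.inv_ne_top.2 ha0))
    (ENNReal.rpow_ne_top_of_nonneg hs'.le (ENNReal.inv_ne_top.2 hb0))
  have scale (u v : ℝ≥0∞) : (a⁻¹ * u) ^ s * (b⁻¹ * v) ^ (1 - s) = c * (u ^ s * v ^ (1 - s)) := by
    rw [ENNReal.mul_rpow_of_nonneg _ _ hs0.le, ENNReal.mul_rpow_of_nonneg _ _ hs'.le,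
      mul_mul_mul_comm]
  have normalized := mul_lintegral_add_mul_lintegral_le_of_iSup_eq_one hs (hf.const_mul a⁻¹)
    (hg.const_mul b⁻¹) (hh.const_mul c)
    (by rw [← ENNReal.mul_iSup, ENNReal.inv_mul_cancel ha0 hfb])
    (by rw [← ENNReal.mul_iSup, ENNReal.inv_mul_cancel hb0 hgb])
    fun x y => by rw [scale]; gcongr; exact hfgh x y
  rw [lintegral_const_mul _ hf, lintegral_const_mul _ hg, lintegral_const_mul _ hh] at normalized
  rw [← ENNReal.mul_le_mul_iff_right hc0 hcb, ← scale]
  exact (rpow_mul_rpow_one_sub_le hs _ _).trans normalized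

theorem prekopa_leindler (hs : s ∈ Ioo 0 1) (hf : Measurable f)
    (hg : Measurable g) (hh : Measurable h)
    (hfgh : ∀ x y, f x ^ s * g y ^ (1 - s) ≤ h (s * x + (1 - s) * y)) :
    (∫⁻ x, f x) ^ s * (∫⁻ x, g x) ^ (1 - s) ≤ ∫⁻ x, h x := by
  have hs' : 0 < 1 - s := sub_pos.2 hs.2
  have iSup_rpow (r : ℝ) (hr : 0 < r) (u : ℕ → ℝ≥0∞) : (⨆ N, u N) ^ r = ⨆ N, u N ^ r :=
    (ENNReal.orderIsoRpow r hr).map_iSup u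
  have trunc_ne_top (u : ℝ → ℝ≥0∞) (N : ℕ) : ⨆ x, min (u x) N ≠ ∞ :=
    ((iSup_le fun x => min_le_right _ _).trans_lt (ENNReal.natCast_lt_top N)).ne
  rw [← iSup_lintegral_min hf, ← iSup_lintegral_min hg, iSup_rpow s hs.1, iSup_rpow _ hs']
  simp only [ENNReal.iSup_mul, ENNReal.mul_iSup]
  refine iSup₂_le fun N M => ?_
  refine prekopa_leindler_of_bdd hs (by fun_prop) (by fun_prop) hh
    (trunc_ne_top f _) (trunc_ne_top g _) fun x y => le_trans ?_ (hfgh x y)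
  have hs0 := hs.1
  gcongr <;> exact min_le_left _ _

end PrekopaLeindler

section PropertyTau

open scoped ENNReal NNReal

/-- Maurey's property `(τ)` of the measure `μ` for the cost `c`, with weights `s` and `1 - s`: a
Prékopa–Leindler inequality relative to `μ`, from which concentration is deduced. By homogeneity
`K = 1` would give an equivalent notion for `s ∈ (0, 1)`; a general `K` lets the inequality be
applied fibrewise on products. -/
def PropertyTau {E : Type*} [MeasurableSpace E] (s : ℝ) (μ : Measure E) (c : E → E → ℝ) : Prop :=
  ∀ (f g : E → ℝ≥0∞) (K : ℝ≥0∞), Measurable f → Measurable g →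
    (∀ x y, f x ^ s * g y ^ (1 - s) ≤ K * ENNReal.ofReal (Real.exp (c x y))) →
    (∫⁻ x, f x ∂μ) ^ s * (∫⁻ x, g x ∂μ) ^ (1 - s) ≤ K

namespace PropertyTau

theorem map {E F : Type*} [MeasurableSpace E] [MeasurableSpace F] {s : ℝ} {μ : Measure E}
    {c : F → F → ℝ} {T : E → F} (h : PropertyTau s μ fun x y => c (T x) (T y))
    (hT : Measurable T) : PropertyTau s (μ.map T) c := by
  intro f g K hf hg hfg
  rw [lintegral_map hf hT, lintegral_map hg hT]
  exact h _ _ K (hf.comp hT) (hg.comp hT) fun x y => hfg (T x) (T y)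

theorem prod {E F : Type*} [MeasurableSpace E] [MeasurableSpace F] {s : ℝ} {μ : Measure E}
    {ν : Measure F} [SFinite ν] {c : E → E → ℝ} {d : F → F → ℝ}
    (hμ : PropertyTau s μ c) (hν : PropertyTau s ν d) :
    PropertyTau s (μ.prod ν) fun p q => c p.1 q.1 + d p.2 q.2 := by
  intro f g K hf hg hfg
  rw [lintegral_prod _ hf.aemeasurable, lintegral_prod _ hg.aemeasurable]
  refine hμ _ _ K hf.lintegral_prod_right' hg.lintegral_prod_right' fun x x' => ?_
  refine hν _ _ _ (by fun_prop) (by fun_prop) fun y y' => (hfg (x, y) (x', y')).trans_eq ?_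
  rw [Real.exp_add, ENNReal.ofReal_mul (Real.exp_nonneg _), mul_assoc]

theorem dirac {E : Type*} [MeasurableSpace E] (s : ℝ) (a : E) {c : E → E → ℝ} (hc : c a a = 0) :
    PropertyTau s (Measure.dirac a) c := by
  intro f g K hf hg hfg
  rw [lintegral_dirac' a hf, lintegral_dirac' a hg]
  simpa [hc] using hfg a a

theorem pi {n : ℕ} {E : Fin n → Type*} [∀ i, MeasurableSpace (E i)] {s : ℝ}
    {μ : ∀ i, Measure (E i)} [∀ i, SigmaFinite (μ i)] {c : ∀ i, E i → E i → ℝ}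
    (h : ∀ i, PropertyTau s (μ i) (c i)) :
    PropertyTau s (Measure.pi μ) fun x y => ∑ i, c i (x i) (y i) := by
  induction n with
  | zero =>
    rw [Measure.pi_of_empty]
    exact dirac s _ (by simp)
  | succ n ih =>
    have split := (measurePreserving_piFinSuccAbove μ 0).symm
    rw [← split.map_eq]
    refine map ?_ split.measurable
    simp only [Fin.sum_univ_succ]
    exact (h 0).prod (ih fun i => h i.succ)

end PropertyTau

theorem ofReal_exp_rpow (a r : ℝ) :
    ENNReal.ofReal (Real.exp a) ^ r = ENNReal.ofReal (Real.exp (a * r)) := by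
  rw [ENNReal.ofReal_rpow_of_pos (Real.exp_pos a), Real.exp_mul]

theorem gaussianPDF_rpow_mul_rpow (m : ℝ) (v : ℝ≥0) {s : ℝ} (hs : s ∈ Set.Ioo 0 1) (x y : ℝ) :
    gaussianPDF m v x ^ s * gaussianPDF m v y ^ (1 - s)
        * ENNReal.ofReal (Real.exp (s * (1 - s) / (2 * v) * (x - y) ^ 2))
      = gaussianPDF m v (s * x + (1 - s) * y) := by
  have hs' : 0 ≤ 1 - s := (sub_pos.2 hs.2).le
  set C : ℝ := (√(2 * Real.pi * v))⁻¹
  have hC : 0 ≤ C := by positivity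
  have pdf (z : ℝ) : gaussianPDF m v z
      = ENNReal.ofReal C * ENNReal.ofReal (Real.exp (-(z - m) ^ 2 / (2 * v))) :=
    ENNReal.ofReal_mul hC
  rw [pdf, pdf, pdf, ENNReal.mul_rpow_of_nonneg _ _ hs.1.le, ENNReal.mul_rpow_of_nonneg _ _ hs',
    ofReal_exp_rpow, ofReal_exp_rpow, mul_mul_mul_comm, mul_assoc,
    ← ENNReal.rpow_add_of_nonneg _ _ hs.1.le hs', add_sub_cancel, ENNReal.rpow_one,
    ← ENNReal.ofReal_mul (Real.exp_nonneg _), ← ENNReal.ofReal_mul (by positivity),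
    ← Real.exp_add, ← Real.exp_add]
  congr 3
  ring

theorem propertyTau_gaussianReal (m : ℝ) {v : ℝ≥0} (hv : v ≠ 0) {s : ℝ} (hs : s ∈ Set.Ioo 0 1) :
    PropertyTau s (gaussianReal m v) fun x y => s * (1 - s) / (2 * v) * (x - y) ^ 2 := by
  intro f g K hf hg hfg
  have hγ := measurable_gaussianPDF m v
  have total : ∫⁻ x, K * gaussianPDF m v x = K := by
    rw [lintegral_const_mul _ hγ, lintegral_gaussianPDF_eq_one m hv, mul_one]
  rw [gaussianReal_of_var_ne_zero m hv, lintegral_withDensity_eq_lintegral_mul _ hγ hf,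
    lintegral_withDensity_eq_lintegral_mul _ hγ hg, ← total]
  refine prekopa_leindler hs (hγ.mul hf) (hγ.mul hg) (by fun_prop) fun x y => ?_
  simp only [Pi.mul_apply]
  rw [ENNReal.mul_rpow_of_nonneg _ _ hs.1.le,
    ENNReal.mul_rpow_of_nonneg _ _ (sub_pos.2 hs.2).le, mul_mul_mul_comm,
    ← gaussianPDF_rpow_mul_rpow m v hs, mul_left_comm K]
  exact mul_le_mul' le_rfl (hfg x y)

variable {E : Type*} [NormedAddCommGroup E] [InnerProductSpace ℝ E] [FiniteDimensional ℝ E]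
  [MeasurableSpace E] [BorelSpace E]

theorem propertyTau_stdGaussian {s : ℝ} (hs : s ∈ Set.Ioo 0 1) :
    PropertyTau s (stdGaussian E) fun x y => s * (1 - s) / 2 * dist x y ^ 2 := by
  have dist_sq (x y : Fin (Module.finrank ℝ E) → ℝ) :
      dist (∑ i, x i • stdOrthonormalBasis ℝ E i) (∑ i, y i • stdOrthonormalBasis ℝ E i) ^ 2
        = ∑ i, (x i - y i) ^ 2 := by
    have repr_symm (z : Fin (Module.finrank ℝ E) → ℝ) : ∑ i, z i • stdOrthonormalBasis ℝ E i
        = (stdOrthonormalBasis ℝ E).repr.symm (WithLp.toLp 2 z) :=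
      (stdOrthonormalBasis ℝ E).sum_repr_symm (WithLp.toLp 2 z)
    rw [repr_symm, repr_symm, LinearIsometryEquiv.dist_map, EuclideanSpace.dist_sq_eq]
    simp [Real.dist_eq]
  refine PropertyTau.map ?_ (by fun_prop)
  simp only [dist_sq, Finset.mul_sum]
  simpa using PropertyTau.pi fun _ : Fin (Module.finrank ℝ E) =>
    propertyTau_gaussianReal 0 one_ne_zero hs

end PropertyTau

section Concentration

open scoped ENNReal NNReal Topology

theorem ofReal_exp_integral_le_lintegral {Ω : Type*} [MeasurableSpace Ω] {μ : Measure Ω}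
    [IsProbabilityMeasure μ] {X : Ω → ℝ} (hX : Integrable X μ) :
    ENNReal.ofReal (Real.exp (∫ ω, X ω ∂μ)) ≤ ∫⁻ ω, ENNReal.ofReal (Real.exp (X ω)) ∂μ := by
  by_cases hexp : Integrable (fun ω => Real.exp (X ω)) μ
  · rw [← ofReal_integral_eq_lintegral_ofReal hexp (.of_forall fun ω => Real.exp_nonneg _)]
    exact ENNReal.ofReal_le_ofReal <| convexOn_exp.map_integral_le Real.continuous_exp.continuousOn
      isClosed_univ (.of_forall fun _ => Set.mem_univ _) hX hexp
  · have hmeas := Real.continuous_exp.comp_aestronglyMeasurable hX.aestronglyMeasurable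
    have : ∫⁻ ω, ENNReal.ofReal (Real.exp (X ω)) ∂μ = ∞ := by
      by_contra hne
      exact hexp ((lintegral_ofReal_ne_top_iff_integrable hmeas
        (.of_forall fun ω => Real.exp_nonneg _)).1 hne)
    exact this ▸ le_top

theorem measureReal_abs_ge_le_of_hasSubgaussianMGF {Ω : Type*} [MeasurableSpace Ω] {μ : Measure Ω}
    {X : Ω → ℝ} {c : ℝ≥0} (h : HasSubgaussianMGF X c μ) {t : ℝ} (ht : 0 ≤ t) :
    μ.real {ω | t ≤ |X ω|} ≤ 2 * Real.exp (-t ^ 2 / (2 * c)) := by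
  have split : {ω | t ≤ |X ω|} = {ω | t ≤ X ω} ∪ {ω | t ≤ (-X) ω} := by
    ext ω
    exact le_abs (a := t) (b := X ω)
  calc μ.real {ω | t ≤ |X ω|} ≤ μ.real {ω | t ≤ X ω} + μ.real {ω | t ≤ (-X) ω} :=
        split ▸ measureReal_union_le _ _
    _ ≤ 2 * Real.exp (-t ^ 2 / (2 * c)) := by
        linarith [h.measure_ge_le ht, h.neg.measure_ge_le ht]

section PseudoMetric

variable {E : Type*} [PseudoMetricSpace E] {F : E → ℝ} {K : ℝ≥0}

theorem mul_sub_le_add_dist_sq_of_lipschitzWith (hF : LipschitzWith K F) {s : ℝ}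
    (hs : s ∈ Set.Ico 0 1) (x y : E) :
    s * (F x - F y) ≤ s * (K ^ 2 / (2 * (1 - s))) + s * (1 - s) / 2 * dist x y ^ 2 := by
  have hs' : 0 < 1 - s := sub_pos.2 hs.2
  have lip : F x - F y ≤ K * dist x y := (le_abs_self _).trans (hF.dist_le_mul x y)
  have completed_square : K ^ 2 / (2 * (1 - s)) + (1 - s) / 2 * dist x y ^ 2 - K * dist x y
      = (K - (1 - s) * dist x y) ^ 2 / (2 * (1 - s)) := by
    field_simp
    ring
  have : 0 ≤ (K - (1 - s) * dist x y) ^ 2 / (2 * (1 - s)) := by positivity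
  calc s * (F x - F y) ≤ s * (K ^ 2 / (2 * (1 - s)) + (1 - s) / 2 * dist x y ^ 2) :=
        mul_le_mul_of_nonneg_left (by linarith) hs.1
    _ = s * (K ^ 2 / (2 * (1 - s))) + s * (1 - s) / 2 * dist x y ^ 2 := by ring

variable [MeasurableSpace E] [OpensMeasurableSpace E] {μ : Measure E} [IsProbabilityMeasure μ]

theorem lintegral_exp_le_of_propertyTau {s : ℝ} (hs : s ∈ Set.Ioo 0 1)
    (hμ : PropertyTau s μ fun x y => s * (1 - s) / 2 * dist x y ^ 2)
    (hF : LipschitzWith K F) (hFi : Integrable F μ) :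
    ∫⁻ x, ENNReal.ofReal (Real.exp (F x)) ∂μ
      ≤ ENNReal.ofReal (Real.exp (∫ x, F x ∂μ + K ^ 2 / (2 * (1 - s)))) := by
  have hs' : 0 < 1 - s := sub_pos.2 hs.2
  obtain ⟨a, ha⟩ : ∃ a, a * (1 - s) = s := ⟨s / (1 - s), div_mul_cancel₀ s hs'.ne'⟩
  have hFm := hF.continuous.measurable
  set I := ∫⁻ x, ENNReal.ofReal (Real.exp (F x)) ∂μ
  set J := ∫⁻ x, ENNReal.ofReal (Real.exp (-a * F x)) ∂μ
  set m := ∫ x, F x ∂μ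
  set C := K ^ 2 / (2 * (1 - s))
  have tau : I ^ s * J ^ (1 - s) ≤ ENNReal.ofReal (Real.exp (s * C)) := by
    refine hμ _ _ _ (by fun_prop) (by fun_prop) fun x y => ?_
    rw [ofReal_exp_rpow, ofReal_exp_rpow, ← ENNReal.ofReal_mul (Real.exp_nonneg _),
      ← ENNReal.ofReal_mul (Real.exp_nonneg _), ← Real.exp_add, ← Real.exp_add]
    refine ENNReal.ofReal_le_ofReal (Real.exp_le_exp.2 ?_)
    linear_combination mul_sub_le_add_dist_sq_of_lipschitzWith hF ⟨hs.1.le, hs.2⟩ x y - F y * ha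
  have jensen : ENNReal.ofReal (Real.exp (-(s * m))) ≤ J ^ (1 - s) := by
    calc ENNReal.ofReal (Real.exp (-(s * m))) = ENNReal.ofReal (Real.exp (-a * m)) ^ (1 - s) := by
          rw [ofReal_exp_rpow]
          congr 2
          linear_combination m * ha
      _ ≤ J ^ (1 - s) := by
          gcongr
          simpa only [integral_const_mul] using
            ofReal_exp_integral_le_lintegral (hFi.const_mul (-a))
  rw [← ENNReal.rpow_le_rpow_iff hs.1]
  calc I ^ s
      = I ^ s * ENNReal.ofReal (Real.exp (-(s * m))) * ENNReal.ofReal (Real.exp (s * m)) := by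
        rw [mul_assoc, ← ENNReal.ofReal_mul (Real.exp_nonneg _), ← Real.exp_add]
        simp
    _ ≤ ENNReal.ofReal (Real.exp (s * C)) * ENNReal.ofReal (Real.exp (s * m)) := by
        gcongr
        exact (mul_le_mul' le_rfl jensen).trans tau
    _ = ENNReal.ofReal (Real.exp (m + C)) ^ s := by
        rw [ofReal_exp_rpow, ← ENNReal.ofReal_mul (Real.exp_nonneg _), ← Real.exp_add]
        ring_nf

theorem integrable_exp_and_integral_exp_le_of_propertyTau
    (hμ : ∀ s ∈ Set.Ioo (0 : ℝ) 1, PropertyTau s μ fun x y => s * (1 - s) / 2 * dist x y ^ 2)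
    (hF : LipschitzWith K F) (hFi : Integrable F μ) :
    Integrable (fun x => Real.exp (F x)) μ ∧
      ∫ x, Real.exp (F x) ∂μ ≤ Real.exp (∫ x, F x ∂μ + K ^ 2 / 2) := by
  have hFm : Measurable fun x => Real.exp (F x) := hF.continuous.measurable.exp
  have bound : ∫⁻ x, ENNReal.ofReal (Real.exp (F x)) ∂μ
      ≤ ENNReal.ofReal (Real.exp (∫ x, F x ∂μ + K ^ 2 / 2)) := by
    have tendsto : Filter.Tendsto
        (fun s : ℝ => ENNReal.ofReal (Real.exp (∫ x, F x ∂μ + K ^ 2 / (2 * (1 - s))))) (𝓝[>] 0)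
        (𝓝 (ENNReal.ofReal (Real.exp (∫ x, F x ∂μ + K ^ 2 / 2)))) := by
      have : ContinuousAt
          (fun s : ℝ => ENNReal.ofReal (Real.exp (∫ x, F x ∂μ + K ^ 2 / (2 * (1 - s))))) 0 :=
        (ENNReal.continuous_ofReal.comp Real.continuous_exp).continuousAt.comp
          (by fun_prop (disch := norm_num))
      simpa [ContinuousAt] using this.mono_left nhdsWithin_le_nhds
    refine ge_of_tendsto tendsto ?_
    filter_upwards [Ioo_mem_nhdsGT one_pos] with s hs
    exact lintegral_exp_le_of_propertyTau hs (hμ s hs) hF hFi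
  have nonneg : 0 ≤ᵐ[μ] fun x => Real.exp (F x) := .of_forall fun x => Real.exp_nonneg _
  have integrable : Integrable (fun x => Real.exp (F x)) μ :=
    (lintegral_ofReal_ne_top_iff_integrable hFm.aestronglyMeasurable nonneg).1
      (bound.trans_lt ENNReal.ofReal_lt_top).ne
  refine ⟨integrable, (ENNReal.ofReal_le_ofReal_iff (Real.exp_nonneg _)).1 ?_⟩
  rwa [ofReal_integral_eq_lintegral_ofReal integrable nonneg]

theorem hasSubgaussianMGF_sub_integral_of_propertyTau
    (hμ : ∀ s ∈ Set.Ioo (0 : ℝ) 1, PropertyTau s μ fun x y => s * (1 - s) / 2 * dist x y ^ 2)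
    (hF : LipschitzWith K F) (hFi : Integrable F μ) :
    HasSubgaussianMGF (fun x => F x - ∫ y, F y ∂μ) (K ^ 2) μ := by
  have exp_tilt (t : ℝ) := integrable_exp_and_integral_exp_le_of_propertyTau hμ
    ((lipschitzWith_smul t).comp hF) (hFi.const_mul t)
  have exp_centered (t : ℝ) : (fun x => Real.exp (t * (F x - ∫ y, F y ∂μ)))
      = fun x => Real.exp (-(t * ∫ y, F y ∂μ)) * Real.exp (t * F x) := by
    funext x
    rw [← Real.exp_add]
    ring_nf
  refine ⟨fun t => exp_centered t ▸ (exp_tilt t).1.const_mul _, fun t => ?_⟩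
  calc mgf (fun x => F x - ∫ y, F y ∂μ) μ t
      = Real.exp (-(t * ∫ y, F y ∂μ)) * ∫ x, Real.exp (t * F x) ∂μ := by
        rw [mgf, exp_centered, integral_const_mul]
    _ ≤ Real.exp (-(t * ∫ y, F y ∂μ))
          * Real.exp (∫ x, t * F x ∂μ + ((‖t‖₊ * K : ℝ≥0) : ℝ) ^ 2 / 2) := by
        gcongr
        exact (exp_tilt t).2
    _ = Real.exp ((K ^ 2 : ℝ≥0) * t ^ 2 / 2) := by
        rw [← Real.exp_add, integral_const_mul]
        push_cast
        rw [mul_pow, Real.norm_eq_abs, sq_abs]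
        ring_nf

end PseudoMetric

theorem integrable_of_lipschitzWith {E : Type*} [NormedAddCommGroup E]
    [MeasurableSpace E] [OpensMeasurableSpace E] {μ : Measure E} [IsFiniteMeasure μ]
    (hμ : Integrable id μ) {F : E → ℝ} {K : ℝ≥0} (hF : LipschitzWith K F) : Integrable F μ := by
  refine ((hμ.norm.const_mul (K : ℝ)).add (integrable_const ‖F 0‖)).mono'
    hF.continuous.measurable.aestronglyMeasurable (.of_forall fun x => ?_)
  have lip : ‖F x - F 0‖ ≤ K * ‖x‖ := by simpa [dist_eq_norm] using hF.dist_le_mul x 0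
  exact (norm_le_norm_sub_add (F x) (F 0)).trans (add_le_add_left lip _)

variable {E : Type*} [NormedAddCommGroup E] [InnerProductSpace ℝ E] [FiniteDimensional ℝ E]
  [MeasurableSpace E] [BorelSpace E]

theorem hasSubgaussianMGF_sub_integral_stdGaussian {F : E → ℝ} {K : ℝ≥0} (hF : LipschitzWith K F) :
    HasSubgaussianMGF (fun x => F x - ∫ y, F y ∂(stdGaussian E)) (K ^ 2) (stdGaussian E) :=
  hasSubgaussianMGF_sub_integral_of_propertyTau (fun _ hs => propertyTau_stdGaussian hs) hF
    (integrable_of_lipschitzWith IsGaussian.integrable_id hF)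

end Concentration

section GaussianPair

variable {E F : Type*} [NormedAddCommGroup E] [InnerProductSpace ℝ E] [FiniteDimensional ℝ E]
  [MeasurableSpace E] [BorelSpace E] [NormedAddCommGroup F] [InnerProductSpace ℝ F]
  [FiniteDimensional ℝ F] [MeasurableSpace F] [BorelSpace F]

theorem map_toLp_prod_stdGaussian :
    ((stdGaussian E).prod (stdGaussian F)).map (WithLp.toLp 2)
      = stdGaussian (WithLp 2 (E × F)) := by
  refine Measure.ext_of_charFun ?_
  ext t
  rw [charFun_prod, charFun_stdGaussian, charFun_stdGaussian, charFun_stdGaussian,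
    ← Complex.exp_add]
  congr 1
  rw [← Complex.ofReal_pow ‖t‖, WithLp.prod_norm_sq_eq_of_L2]
  push_cast [WithLp.fst, WithLp.snd]
  ring

theorem map_muGH_eq_stdGaussian (m n : ℕ) :
    (muGH m n).map (fun p => WithLp.toLp 2 (WithLp.toLp 2 p.1, WithLp.toLp 2 p.2))
      = stdGaussian (WithLp 2 (EuclideanSpace ℝ (Fin m) × EuclideanSpace ℝ (Fin n))) := by
  rw [← map_toLp_prod_stdGaussian, ← map_pi_eq_stdGaussian, ← map_pi_eq_stdGaussian,
    Measure.map_prod_map _ _ (by fun_prop) (by fun_prop),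
    Measure.map_map (by fun_prop) (by fun_prop)]
  rfl

end GaussianPair

section Objective

open scoped NNReal

theorem lipschitzWith_iInf {ι X : Type*} [Nonempty ι] [PseudoMetricSpace X] {f : ι → X → ℝ}
    {K : ℝ≥0} (hf : ∀ i, LipschitzWith K (f i)) (hbdd : ∀ x, BddBelow (Set.range fun i => f i x)) :
    LipschitzWith K fun x => ⨅ i, f i x := by
  refine LipschitzWith.of_le_add_mul K fun x y => ?_
  rw [← sub_le_iff_le_add]
  refine le_ciInf fun i => sub_le_iff_le_add.2 ?_
  exact (ciInf_le (hbdd x) i).trans ((hf i).le_add_mul x y)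

variable {E F : Type*} [NormedAddCommGroup E] [NormedAddCommGroup F] [InnerProductSpace ℝ F]

/-- The function of `z = (g, h)` minimized over `w` in the definition of `ξ`. The pair `(g, h)` is
taken in the `ℓ²` product, whose norm is the Euclidean one on `ℝᵐ⁺ⁿ`. -/
noncomputable def xiObjective (σ : ℝ) (w : F) (z : WithLp 2 (E × F)) : ℝ :=
  √(‖w‖ ^ 2 + σ ^ 2) * ‖z.fst‖ + inner ℝ z.snd w

theorem lipschitzWith_xiObjective {σ : ℝ} {w : F} {K : ℝ≥0} (hK : 2 * ‖w‖ ^ 2 + σ ^ 2 ≤ K ^ 2) :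
    LipschitzWith K (xiObjective (E := E) σ w) := by
  refine LipschitzWith.of_le_add_mul K fun z z' => ?_
  set r := √(‖w‖ ^ 2 + σ ^ 2)
  set u := ‖(z - z').fst‖
  set v := ‖(z - z').snd‖
  have triangle : ‖z.fst‖ ≤ ‖z'.fst‖ + u := norm_le_norm_add_norm_sub' _ _
  have inner_le : inner ℝ z.snd w ≤ inner ℝ z'.snd w + v * ‖w‖ := by
    rw [← sub_le_iff_le_add', ← inner_sub_left]
    exact real_inner_le_norm _ _
  have cauchy_schwarz : r * u + v * ‖w‖ ≤ K * dist z z' := by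
    refine abs_le_of_sq_le_sq' ?_ (by positivity) |>.2
    have hr : r ^ 2 = ‖w‖ ^ 2 + σ ^ 2 := Real.sq_sqrt (by positivity)
    have hdist : dist z z' ^ 2 = u ^ 2 + v ^ 2 := by
      rw [dist_eq_norm, WithLp.prod_norm_sq_eq_of_L2]
    calc (r * u + v * ‖w‖) ^ 2 ≤ (r ^ 2 + ‖w‖ ^ 2) * (u ^ 2 + v ^ 2) := by
          linarith [sq_nonneg (r * v - ‖w‖ * u)]
      _ ≤ K ^ 2 * dist z z' ^ 2 := by
          rw [hdist]
          gcongr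
          linarith
      _ = (K * dist z z') ^ 2 := by ring
  calc xiObjective σ w z ≤ r * (‖z'.fst‖ + u) + (inner ℝ z'.snd w + v * ‖w‖) := by
        unfold xiObjective
        gcongr
    _ = xiObjective σ w z' + (r * u + v * ‖w‖) := by
        unfold xiObjective
        ring
    _ ≤ xiObjective σ w z' + K * dist z z' := by gcongr

theorem neg_mul_norm_snd_le_xiObjective (σ : ℝ) {w : F} {C : ℝ} (hw : ‖w‖ ≤ C)
    (z : WithLp 2 (E × F)) : -(C * ‖z.snd‖) ≤ xiObjective σ w z := by
  have inner_ge : -(‖z.snd‖ * ‖w‖) ≤ inner ℝ z.snd w :=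
    neg_le_of_abs_le (abs_real_inner_le_norm _ _)
  have : ‖z.snd‖ * ‖w‖ ≤ ‖z.snd‖ * C := by gcongr
  have : 0 ≤ √(‖w‖ ^ 2 + σ ^ 2) * ‖z.fst‖ := by positivity
  unfold xiObjective
  linarith

theorem lipschitzWith_iInf_xiObjective {ι : Type*} [Nonempty ι] (σ : ℝ) {w : ι → F} {C : ℝ}
    (hw : ∀ i, ‖w i‖ ≤ C) :
    LipschitzWith (√(2 * C ^ 2 + σ ^ 2)).toNNReal
      fun z : WithLp 2 (E × F) => ⨅ i, xiObjective σ (w i) z := by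
  refine lipschitzWith_iInf (fun i => lipschitzWith_xiObjective ?_)
    fun z => ⟨-(C * ‖z.snd‖), Set.forall_mem_range.2 fun i =>
      neg_mul_norm_snd_le_xiObjective σ (hw i) z⟩
  rw [Real.coe_toNNReal _ (Real.sqrt_nonneg _), Real.sq_sqrt (by positivity)]
  gcongr
  exact hw i

theorem e2norm_eq_norm {d : ℕ} (x : Fin d → ℝ) : e2norm x = ‖WithLp.toLp 2 x‖ := by
  simp [e2norm, EuclideanSpace.norm_eq]

theorem xiFun_eq_iInf_xiObjective (m n : ℕ) (σ Cw : ℝ) (xt : Fin n → ℝ)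
    (p : (Fin m → ℝ) × (Fin n → ℝ)) :
    xiFun m n σ Cw xt p
      = ⨅ w : {w : Fin n → ℝ | e2norm w ≤ Cw ∧ l1norm (xt + w) ≤ l1norm xt},
        xiObjective σ (WithLp.toLp 2 w.1)
          (WithLp.toLp 2 (WithLp.toLp 2 p.1, WithLp.toLp 2 p.2)) := by
  rw [xiFun, sInf_image']
  refine iInf_congr fun w => ?_
  simp [xiObjective, e2norm_eq_norm, PiLp.inner_apply, mul_comm]

theorem hasSubgaussianMGF_xiFun_sub_integral (m n : ℕ) (xt : Fin n → ℝ) (σ : ℝ) {Cw : ℝ}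
    (hCw : 0 ≤ Cw) :
    HasSubgaussianMGF (fun p => xiFun m n σ Cw xt p - ∫ q, xiFun m n σ Cw xt q ∂(muGH m n))
      ((√(2 * Cw ^ 2 + σ ^ 2)).toNNReal ^ 2) (muGH m n) := by
  have : Nonempty {w : Fin n → ℝ | e2norm w ≤ Cw ∧ l1norm (xt + w) ≤ l1norm xt} :=
    ⟨0, by simpa [e2norm] using hCw⟩
  have lipschitz := lipschitzWith_iInf_xiObjective (E := EuclideanSpace ℝ (Fin m)) σ
    fun w : {w : Fin n → ℝ | e2norm w ≤ Cw ∧ l1norm (xt + w) ≤ l1norm xt} =>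
      (e2norm_eq_norm w.1).symm.trans_le w.2.1
  have concentration := hasSubgaussianMGF_sub_integral_stdGaussian lipschitz
  rw [← map_muGH_eq_stdGaussian, integral_map (by fun_prop)
    lipschitz.continuous.aestronglyMeasurable] at concentration
  simp only [xiFun_eq_iInf_xiObjective]
  exact concentration.of_map (by fun_prop)

end Objective

theorem lasso_stmt11_general (m n : ℕ) (xt : Fin n → ℝ) (σ : ℝ) {Cw : ℝ} (hCw : 0 < Cw) :
    Integrable (xiFun m n σ Cw xt) (muGH m n) ∧
    ∀ t : ℝ, 0 < t →
      muGH m n {p | t ≤ |xiFun m n σ Cw xt p - ∫ q, xiFun m n σ Cw xt q ∂(muGH m n)|}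
        ≤ ENNReal.ofReal (2 * Real.exp (-t ^ 2 / (2 * (2 * Cw ^ 2 + σ ^ 2)))) := by
  have : IsProbabilityMeasure (muGH m n) := by unfold muGH; infer_instance
  have concentration := hasSubgaussianMGF_xiFun_sub_integral m n xt σ hCw.le
  refine ⟨?_, fun t ht => ?_⟩
  · simpa only [Pi.add_def, sub_add_cancel] using
      concentration.integrable.add (integrable_const (∫ q, xiFun m n σ Cw xt q ∂(muGH m n)))
  · have variance_proxy :
        (((√(2 * Cw ^ 2 + σ ^ 2)).toNNReal ^ 2 : NNReal) : ℝ) = 2 * Cw ^ 2 + σ ^ 2 := by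
      rw [NNReal.coe_pow, Real.coe_toNNReal _ (Real.sqrt_nonneg _), Real.sq_sqrt (by positivity)]
    have tail := measureReal_abs_ge_le_of_hasSubgaussianMGF concentration ht.le
    rw [variance_proxy] at tail
    exact (ENNReal.le_ofReal_iff_toReal_le (measure_ne_top _ _) (by positivity)).2 tail

theorem lasso_stmt11 (m n k : ℕ) (hm : 1 ≤ m) (hn : 1 ≤ n) (hk1 : 1 ≤ k) (hkn : k ≤ n)
    (xt : Fin n → ℝ) (hxt : kSparseNonneg n k xt)
    (σ Cw : ℝ) (hσ : 0 < σ) (hCw : 0 < Cw) :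
    Integrable (xiFun m n σ Cw xt) (muGH m n) ∧
    ∀ t : ℝ, 0 < t →
      muGH m n {p | t ≤ |xiFun m n σ Cw xt p - ∫ q, xiFun m n σ Cw xt q ∂(muGH m n)|}
        ≤ ENNReal.ofReal (2 * Real.exp (-t ^ 2 / (2 * (2 * Cw ^ 2 + σ ^ 2)))) :=
  lasso_stmt11_general m n xt σ hCw
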